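/- arXiv:1205.1348 — 2 statements merged into one kernel-verified Lean document; each statement's English description precedes it below -/
import Mathlib

section
/- For every even integer k with 2 ≤ k ≤ 2n, the colon ideal I^k : m equals I^k; equivalently, the graded maximal ideal m is not an associated prime of S/I^k, so depth(S/I^k) > 0. -/
open MvPolynomial

noncomputable section

/-- The depth of a module `M` with respect to an ideal `J`: the supremum of the lengths of
`M`-regular sequences consisting of elements of `J`. -/
noncomputable def depthWrt {R : Type*} [CommRing R] (J : Ideal R)
    (M : Type*) [AddCommGroup M] [Module R M] : ℕ∞ :=
  sSup {k : ℕ∞ | ∃ rs : List R, (rs.length : ℕ∞) = k ∧ (∀ r ∈ rs, r ∈ J) ∧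
    RingTheory.Sequence.IsRegular M rs}

/-- The type of the `2n+4` variables `a, b, c, d, x₁, y₁, …, xₙ, yₙ`. -/
abbrev Vars (n : ℕ) : Type := Fin 4 ⊕ Fin n ⊕ Fin n

variable (K : Type*) [Field K] (n : ℕ)

/-- The variable `a`. -/
def va : MvPolynomial (Vars n) K := X (Sum.inl 0)
/-- The variable `b`. -/
def vb : MvPolynomial (Vars n) K := X (Sum.inl 1)
/-- The variable `c`. -/
def vc : MvPolynomial (Vars n) K := X (Sum.inl 2)
/-- The variable `d`. -/
def vd : MvPolynomial (Vars n) K := X (Sum.inl 3)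
/-- The variable `xᵢ` (for `i = 0, …, n-1` corresponding to `x₁, …, xₙ`). -/
def vx (i : Fin n) : MvPolynomial (Vars n) K := X (Sum.inr (Sum.inl i))
/-- The variable `yᵢ` (for `i = 0, …, n-1` corresponding to `y₁, …, yₙ`). -/
def vy (i : Fin n) : MvPolynomial (Vars n) K := X (Sum.inr (Sum.inr i))

/-- The monomial ideal
`I = (a⁶, a⁵b, ab⁵, b⁶, a⁴b⁴c, a⁴b⁴d, a⁴x₁y₁², b⁴x₁²y₁, …, a⁴xₙyₙ², b⁴xₙ²yₙ)`. -/
def idealI : Ideal (MvPolynomial (Vars n) K) :=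
  Ideal.span
    ({va K n ^ 6, va K n ^ 5 * vb K n, va K n * vb K n ^ 5, vb K n ^ 6,
      va K n ^ 4 * vb K n ^ 4 * vc K n, va K n ^ 4 * vb K n ^ 4 * vd K n} ∪
     Set.range (fun i => va K n ^ 4 * vx K n i * vy K n i ^ 2) ∪
     Set.range (fun i => vb K n ^ 4 * vx K n i ^ 2 * vy K n i))

/-- The graded maximal ideal `m = (a,b,c,d,x₁,y₁,…,xₙ,yₙ)`. -/
def mMax : Ideal (MvPolynomial (Vars n) K) := Ideal.span (Set.range X)

/-!
A monomial lies in `Iᵏ` exactly when a product of `k` generators divides it. Suppose that `f` is a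
monomial outside `Iᵏ` with `v * f ∈ Iᵏ` for every variable `v`. A product of `k` generators
dividing `c * f` must involve `a⁴b⁴c`, so `f` is a multiple of `a⁴b⁴ * M` with `M` a product of
`k - 1` generators. Now `a⁴b⁴` times any generator other than `a⁴xᵢyᵢ²` and `b⁴xᵢ²yᵢ` lies in `I²`,
and `a⁴b⁴` times `(a⁴xᵢyᵢ²)²` or `(b⁴xᵢ²yᵢ)²` lies in `I³`. As `f ∉ Iᵏ`, these are excluded, and `M`
is a product of distinct generators of the form `a⁴xᵢyᵢ²` and `b⁴xᵢ²yᵢ`. If `k - 1` is odd or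
exceeds `2n`, some index `i` contributes exactly one of the two, say `b⁴xᵢ²yᵢ`. Since
`a⁴b⁴ * yᵢ * b⁴xᵢ²yᵢ ∈ I²`, the degree of `f` in `yᵢ` is `1`, while its degree in `xᵢ` is at least
`2`. A product of `k` generators dividing `xᵢ * f` has degree at most `1` in `yᵢ`, hence at most `2`
in `xᵢ`, so it already divides `f`, a contradiction.
-/

/-! ### Colon ideals, associated primes and depth -/

section Depth

variable {R : Type*} [CommRing R]

theorem notMem_associatedPrimes_quotient_of_colon_eq [IsNoetherianRing R] {I P : Ideal R}
    (h : I.colon P = I) : P ∉ associatedPrimes R (R ⧸ I) := by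
  intro hP
  obtain ⟨hprime, x, hx⟩ := isAssociatedPrime_iff.1 hP
  obtain ⟨f, rfl⟩ := Ideal.Quotient.mk_surjective x
  have hf : f ∈ I.colon P := Submodule.mem_colon.2 fun r hr => by
    rw [SetLike.mem_coe, hx, Submodule.mem_colon_singleton, Submodule.mem_bot] at hr
    rw [smul_eq_mul, mul_comm]
    exact Ideal.Quotient.eq_zero_iff_mem.1 hr
  rw [h, ← Ideal.Quotient.eq_zero_iff_mem] at hf
  exact hprime.ne_top (by simp [hx, hf])

theorem smul_top_quotient_ne_top {I J : Ideal R} (hIJ : I ≤ J) (hJ : J ≠ ⊤) :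
    J • (⊤ : Submodule R (R ⧸ I)) ≠ ⊤ := by
  intro htop
  rw [Ideal.smul_top_eq_map, Submodule.restrictScalars_eq_top_iff, Ideal.Quotient.algebraMap_eq]
    at htop
  exact hJ (by rw [← Ideal.comap_map_mk hIJ, htop, Ideal.comap_top])

theorem exists_isSMulRegular_of_notMem_associatedPrimes [IsNoetherianRing R] {P : Ideal R}
    [P.IsMaximal] {M : Type*} [AddCommGroup M] [Module R M] [Module.Finite R M]
    (hP : P ∉ associatedPrimes R M) : ∃ r ∈ P, IsSMulRegular M r := by
  have hsub := (Ideal.subset_iUnion_iff_mem_of_isMaximal_of_finite (associatedPrimes.finite R M)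
    P P (fun p hp _ _ => hp.isPrime) ‹P.IsMaximal›.ne_top ‹P.IsMaximal›.ne_top).not.2 hP
  rw [biUnion_associatedPrimes_eq_compl_regular, Set.not_subset] at hsub
  simpa using hsub

theorem depthWrt_pos_of_isSMulRegular {J : Ideal R} {M : Type*} [AddCommGroup M] [Module R M]
    (hM : J • (⊤ : Submodule R M) ≠ ⊤) {r : R} (hrJ : r ∈ J) (hr : IsSMulRegular M r) :
    0 < depthWrt J M := by
  have hreg : RingTheory.Sequence.IsRegular M [r] :=
    ⟨(RingTheory.Sequence.isWeaklyRegular_singleton_iff M r).2 hr, fun htop =>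
      hM (top_unique (htop.trans_le (Submodule.smul_mono_left
        (by simpa [Ideal.span_le] using hrJ))))⟩
  exact one_pos.trans_le (le_sSup ⟨[r], by simp, by simpa using hrJ, hreg⟩)

theorem depthWrt_quotient_pos_of_colon_eq [IsNoetherianRing R] {I P : Ideal R} [P.IsMaximal]
    (hIP : I ≤ P) (h : I.colon P = I) : 0 < depthWrt P (R ⧸ I) := by
  obtain ⟨r, hrP, hr⟩ := exists_isSMulRegular_of_notMem_associatedPrimes
    (notMem_associatedPrimes_quotient_of_colon_eq h)
  exact depthWrt_pos_of_isSMulRegular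
    (smul_top_quotient_ne_top hIP ‹P.IsMaximal›.ne_top) hrP hr

end Depth

/-! ### Powers of monomial ideals -/

section MonomialIdeal

variable {ι σ : Type*} {e : ι → σ →₀ ℕ} {k l : ℕ} {u v : σ →₀ ℕ}

/-- The exponent vectors of the monomials lying in the `k`-th power of the monomial ideal
generated by the `x ^ e i`. The coefficient `m i` is the multiplicity with which the `i`-th
generator occurs in a product of `k` generators dividing the monomial. -/
def powExponents (e : ι → σ →₀ ℕ) (k : ℕ) : Set (σ →₀ ℕ) :=
  {u | ∃ m : ι →₀ ℕ, m.degree = k ∧ Finsupp.linearCombination ℕ e m ≤ u}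

theorem isUpperSet_powExponents (e : ι → σ →₀ ℕ) (k : ℕ) : IsUpperSet (powExponents e k) :=
  fun _ _ huv ⟨m, hm, hmu⟩ => ⟨m, hm, hmu.trans huv⟩

theorem linearCombination_mem_powExponents (e : ι → σ →₀ ℕ) (m : ι →₀ ℕ) :
    Finsupp.linearCombination ℕ e m ∈ powExponents e m.degree :=
  ⟨m, rfl, le_rfl⟩

theorem mem_powExponents_one (i : ι) : e i ∈ powExponents e 1 :=
  ⟨Finsupp.single i 1, by simp⟩

theorem add_mem_powExponents (hu : u ∈ powExponents e k) (hv : v ∈ powExponents e l) :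
    u + v ∈ powExponents e (k + l) := by
  obtain ⟨p, rfl, hpu⟩ := hu
  obtain ⟨q, rfl, hqv⟩ := hv
  exact ⟨p + q, map_add _ _ _, (map_add _ _ _).trans_le (add_le_add hpu hqv)⟩

theorem mem_powExponents_two_of_le (i₁ i₂ : ι) (hu : e i₁ + e i₂ ≤ u) : u ∈ powExponents e 2 :=
  isUpperSet_powExponents e 2 hu
    (add_mem_powExponents (mem_powExponents_one i₁) (mem_powExponents_one i₂))

theorem mem_powExponents_three_of_le (i₁ i₂ i₃ : ι) (hu : e i₁ + e i₂ + e i₃ ≤ u) :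
    u ∈ powExponents e 3 :=
  isUpperSet_powExponents e 3 hu
    (add_mem_powExponents (mem_powExponents_two_of_le i₁ i₂ le_rfl) (mem_powExponents_one i₃))

theorem add_linearCombination_mem_powExponents {p m : ι →₀ ℕ} (hpm : p ≤ m)
    (h : v + Finsupp.linearCombination ℕ e p ∈ powExponents e (p.degree + l)) :
    v + Finsupp.linearCombination ℕ e m ∈ powExponents e (m.degree + l) := by
  obtain ⟨q, rfl⟩ := le_iff_exists_add.1 hpm
  rw [map_add, map_add, ← add_assoc, add_right_comm p.degree]
  exact add_mem_powExponents h (linearCombination_mem_powExponents e q)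

theorem add_single_one_le_of_lt (huv : u ≤ v) {s : σ} (hs : u s < v s) :
    u + Finsupp.single s 1 ≤ v := by
  rw [← le_tsub_iff_left huv, Finsupp.single_le_iff]
  exact Nat.le_sub_of_add_le' hs

variable {R : Type*} [CommSemiring R]

theorem mem_span_range_monomial_pow_iff {f : MvPolynomial σ R} :
    f ∈ Ideal.span (Set.range fun i => monomial (e i) (1 : R)) ^ k ↔
      ∀ u ∈ f.support, u ∈ powExponents e k := by
  have hpow : Ideal.span (Set.range fun i => monomial (e i) (1 : R)) ^ k =
      Ideal.span ((fun u => monomial u 1) ''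
        (Finsupp.linearCombination ℕ e '' {m | m.degree = k})) := by
    rw [Ideal.span, Submodule.span_pow, ← Set.image_univ, Finsupp.image_pow_eq_finsuppProd_image]
    simp [Set.image_image, Finsupp.linearCombination_apply, Finsupp.sum, Finsupp.prod,
      monomial_sum_one, monomial_pow]
  rw [hpow, mem_ideal_span_monomial_image]
  simp [powExponents]

theorem colon_span_range_X_eq_self {I : Ideal (MvPolynomial σ R)} {A : Set (σ →₀ ℕ)}
    (hI : ∀ f, f ∈ I ↔ ∀ u ∈ f.support, u ∈ A)
    (hA : ∀ u, (∀ i, u + Finsupp.single i 1 ∈ A) → u ∈ A) :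
    I.colon (Ideal.span (Set.range (X : σ → MvPolynomial σ R))) = I := by
  refine le_antisymm (fun f hf => (hI f).2 fun u hu => hA u fun i => ?_) Ideal.le_colon
  rw [Ideal.colon_span, Submodule.mem_colon] at hf
  refine (hI _).1 (hf (X i) ⟨i, rfl⟩) _ ?_
  simpa using hu

end MonomialIdeal

theorem mMax_eq_ker_constantCoeff :
    mMax K n = RingHom.ker (constantCoeff : MvPolynomial (Vars n) K →+* K) := by
  ext f
  rw [mMax, ← pow_one (Ideal.span _), mem_pow_idealOfVars_iff', RingHom.mem_ker]
  simp [constantCoeff_eq, Finsupp.degree_eq_zero_iff]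

instance mMax_isMaximal : (mMax K n).IsMaximal := by
  rw [mMax_eq_ker_constantCoeff]
  exact RingHom.ker_isMaximal_of_surjective _ fun c => ⟨C c, constantCoeff_C _ c⟩

/-! ### The generators of `I` -/

/-- The generators of `idealI K n`, each named after the monomial it stands for: `a4b4c` is
`a⁴b⁴c`, and `a4xy2 i`, `b4x2y i` are `a⁴xᵢyᵢ²`, `b⁴xᵢ²yᵢ`. -/
inductive Generator (n : ℕ) : Type
  | a6 | a5b | ab5 | b6 | a4b4c | a4b4d
  | a4xy2 (i : Fin n)
  | b4x2y (i : Fin n)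

namespace Generator

open Finsupp

variable {n}

/-- The exponent vector of a generator of `idealI K n`. -/
def exponent : Generator n → Vars n →₀ ℕ
  | a6 => single (.inl 0) 6
  | a5b => single (.inl 0) 5 + single (.inl 1) 1
  | ab5 => single (.inl 0) 1 + single (.inl 1) 5
  | b6 => single (.inl 1) 6
  | a4b4c => single (.inl 0) 4 + single (.inl 1) 4 + single (.inl 2) 1
  | a4b4d => single (.inl 0) 4 + single (.inl 1) 4 + single (.inl 3) 1
  | a4xy2 i => single (.inl 0) 4 + single (.inr (.inl i)) 1 + single (.inr (.inr i)) 2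
  | b4x2y i => single (.inl 1) 4 + single (.inr (.inl i)) 2 + single (.inr (.inr i)) 1

theorem idealI_eq_span_range_monomial :
    idealI K n = Ideal.span (Set.range fun g : Generator n => monomial g.exponent (1 : K)) := by
  rw [idealI]
  congr 1
  ext f
  constructor
  · rintro ((hf | ⟨i, rfl⟩) | ⟨i, rfl⟩)
    · simp only [Set.mem_insert_iff, Set.mem_singleton_iff] at hf
      rcases hf with rfl | rfl | rfl | rfl | rfl | rfl
      · exact ⟨a6, by simp [exponent, va, X_pow_eq_monomial]⟩
      · exact ⟨a5b, by simp [exponent, va, vb, X, monomial_pow, monomial_mul]⟩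
      · exact ⟨ab5, by simp [exponent, va, vb, X, monomial_pow, monomial_mul]⟩
      · exact ⟨b6, by simp [exponent, vb, X_pow_eq_monomial]⟩
      · exact ⟨a4b4c, by simp [exponent, va, vb, vc, X, monomial_pow, monomial_mul]⟩
      · exact ⟨a4b4d, by simp [exponent, va, vb, vd, X, monomial_pow, monomial_mul]⟩
    · exact ⟨a4xy2 i, by simp [exponent, va, vx, vy, X, monomial_pow, monomial_mul]⟩
    · exact ⟨b4x2y i, by simp [exponent, vb, vx, vy, X, monomial_pow, monomial_mul]⟩
  · rintro ⟨g, rfl⟩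
    cases g <;> simp [exponent, va, vb, vc, vd, vx, vy, X, monomial_pow, monomial_mul]

theorem linearCombination_exponent_apply_c (m : Generator n →₀ ℕ) :
    linearCombination ℕ exponent m (.inl 2) = m a4b4c := by
  induction m using Finsupp.induction_linear with
  | zero => simp
  | add p q hp hq => simp [hp, hq]
  | single g k => cases g <;> simp [exponent]

theorem linearCombination_exponent_apply_x (m : Generator n →₀ ℕ) (i : Fin n) :
    linearCombination ℕ exponent m (.inr (.inl i)) = m (a4xy2 i) + 2 * m (b4x2y i) := by
  classical
  induction m using Finsupp.induction_linear with
  | zero => simp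
  | add p q hp hq => simp only [map_add, Finsupp.add_apply, hp, hq]; ring
  | single g k =>
    cases g <;>
      grind [linearCombination_single, exponent, Finsupp.add_apply, Finsupp.smul_apply]

theorem linearCombination_exponent_apply_y (m : Generator n →₀ ℕ) (i : Fin n) :
    linearCombination ℕ exponent m (.inr (.inr i)) = 2 * m (a4xy2 i) + m (b4x2y i) := by
  classical
  induction m using Finsupp.induction_linear with
  | zero => simp
  | add p q hp hq => simp only [map_add, Finsupp.add_apply, hp, hq]; ring
  | single g k =>
    cases g <;>
      grind [linearCombination_single, exponent, Finsupp.add_apply, Finsupp.smul_apply]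

theorem degree_eq_sum (m : Generator n →₀ ℕ) :
    m.degree = m a6 + m a5b + m ab5 + m b6 + m a4b4c + m a4b4d +
      ∑ i, (m (a4xy2 i) + m (b4x2y i)) := by
  classical
  induction m using Finsupp.induction_linear with
  | zero => simp
  | add p q hp hq => simp only [map_add, Finsupp.add_apply, hp, hq, Finset.sum_add_distrib]; ring
  | single g k => cases g <;> simp [single_apply]

/-- The exponent vector of `a⁴b⁴`. -/
def a4b4 : Vars n →₀ ℕ := single (.inl 0) 4 + single (.inl 1) 4

theorem a4b4_add_exponent_mem {g : Generator n}
    (hg : g ∉ Set.range a4xy2 ∪ Set.range b4x2y) :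
    a4b4 + g.exponent ∈ powExponents exponent 2 := by
  cases g with
  | a6 =>
    exact mem_powExponents_two_of_le a5b a5b fun v => by grind [exponent, a4b4, Finsupp.add_apply]
  | a5b =>
    exact mem_powExponents_two_of_le a6 ab5 fun v => by grind [exponent, a4b4, Finsupp.add_apply]
  | ab5 =>
    exact mem_powExponents_two_of_le a5b b6 fun v => by grind [exponent, a4b4, Finsupp.add_apply]
  | b6 =>
    exact mem_powExponents_two_of_le ab5 ab5 fun v => by grind [exponent, a4b4, Finsupp.add_apply]
  | a4b4c =>
    exact mem_powExponents_two_of_le a6 b6 fun v => by grind [exponent, a4b4, Finsupp.add_apply]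
  | a4b4d =>
    exact mem_powExponents_two_of_le a6 b6 fun v => by grind [exponent, a4b4, Finsupp.add_apply]
  | a4xy2 i => simp at hg
  | b4x2y i => simp at hg

theorem a4b4_add_two_nsmul_a4xy2_mem (i : Fin n) :
    a4b4 + 2 • (a4xy2 i).exponent ∈ powExponents exponent 3 :=
  mem_powExponents_three_of_le a6 a6 (b4x2y i) fun v => by
    grind [exponent, a4b4, Finsupp.add_apply, Finsupp.smul_apply]

theorem a4b4_add_two_nsmul_b4x2y_mem (i : Fin n) :
    a4b4 + 2 • (b4x2y i).exponent ∈ powExponents exponent 3 :=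
  mem_powExponents_three_of_le b6 b6 (a4xy2 i) fun v => by
    grind [exponent, a4b4, Finsupp.add_apply, Finsupp.smul_apply]

theorem a4b4_add_x_add_a4xy2_mem (i : Fin n) :
    a4b4 + single (.inr (.inl i)) 1 + (a4xy2 i).exponent ∈ powExponents exponent 2 :=
  mem_powExponents_two_of_le a6 (b4x2y i) fun v => by
    grind [exponent, a4b4, Finsupp.add_apply]

theorem a4b4_add_y_add_b4x2y_mem (i : Fin n) :
    a4b4 + single (.inr (.inr i)) 1 + (b4x2y i).exponent ∈ powExponents exponent 2 :=
  mem_powExponents_two_of_le b6 (a4xy2 i) fun v => by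
    grind [exponent, a4b4, Finsupp.add_apply]

section Obstruction

variable {m : Generator n →₀ ℕ} {u : Vars n →₀ ℕ} {k : ℕ}

theorem exists_a4b4_add_linearCombination_le
    (h : u + single (.inl 2) 1 ∈ powExponents exponent k) (hu : u ∉ powExponents exponent k) :
    ∃ m : Generator n →₀ ℕ, m.degree + 1 = k ∧ a4b4 + linearCombination ℕ exponent m ≤ u := by
  obtain ⟨m, rfl, hm⟩ := h
  have hc : 1 ≤ m a4b4c := by
    by_contra! hc
    refine hu ⟨m, rfl, fun v => ?_⟩
    by_cases hv : v = .inl 2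
    · subst hv
      rw [linearCombination_exponent_apply_c]
      omega
    · simpa [hv] using hm v
  obtain ⟨p, rfl⟩ := le_iff_exists_add'.1 (single_le_iff.2 hc)
  refine ⟨p, by simp, ?_⟩
  rwa [map_add, linearCombination_single, one_smul, exponent, ← a4b4, ← add_assoc,
    add_le_add_iff_right, add_comm] at hm

theorem apply_eq_zero_of_notMem
    (hm : a4b4 + linearCombination ℕ exponent m ∉ powExponents exponent (m.degree + 1))
    {g : Generator n} (hg : g ∉ Set.range a4xy2 ∪ Set.range b4x2y) : m g = 0 := by
  contrapose! hm
  apply add_linearCombination_mem_powExponents (single_le_iff.2 (Nat.one_le_iff_ne_zero.2 hm))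
  simpa using a4b4_add_exponent_mem hg

theorem apply_a4xy2_le_one_of_notMem
    (hm : a4b4 + linearCombination ℕ exponent m ∉ powExponents exponent (m.degree + 1))
    (i : Fin n) : m (a4xy2 i) ≤ 1 := by
  contrapose! hm
  apply add_linearCombination_mem_powExponents (single_le_iff.2 hm)
  simpa using a4b4_add_two_nsmul_a4xy2_mem i

theorem apply_b4x2y_le_one_of_notMem
    (hm : a4b4 + linearCombination ℕ exponent m ∉ powExponents exponent (m.degree + 1))
    (i : Fin n) : m (b4x2y i) ≤ 1 := by
  contrapose! hm
  apply add_linearCombination_mem_powExponents (single_le_iff.2 hm)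
  simpa using a4b4_add_two_nsmul_b4x2y_mem i

theorem exists_apply_a4xy2_ne_apply_b4x2y
    (hm : a4b4 + linearCombination ℕ exponent m ∉ powExponents exponent (m.degree + 1))
    (hdeg : Odd m.degree ∨ 2 * n < m.degree) : ∃ i, m (a4xy2 i) ≠ m (b4x2y i) := by
  by_contra! heq
  have hsum : m.degree = 2 * ∑ i, m (a4xy2 i) := by
    rw [degree_eq_sum, Finset.mul_sum]
    simp [apply_eq_zero_of_notMem hm, ← heq, two_mul]
  have hle : ∑ i, m (a4xy2 i) ≤ n := by
    simpa using Finset.sum_le_sum fun i (_ : i ∈ Finset.univ) => apply_a4xy2_le_one_of_notMem hm i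
  rcases hdeg with ⟨r, hr⟩ | hdeg <;> omega

theorem apply_x_le_of_notMem (hmu : a4b4 + linearCombination ℕ exponent m ≤ u)
    (hu : u ∉ powExponents exponent (m.degree + 1)) {i : Fin n} (hi : m (a4xy2 i) ≠ 0) :
    u (.inr (.inl i)) ≤ m (a4xy2 i) + 2 * m (b4x2y i) := by
  contrapose! hu
  have hlt : (a4b4 + linearCombination ℕ exponent m : Vars n →₀ ℕ) (.inr (.inl i)) <
      u (.inr (.inl i)) := by
    simpa [a4b4, linearCombination_exponent_apply_x] using hu
  refine isUpperSet_powExponents _ _ (add_single_one_le_of_lt hmu hlt) ?_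
  rw [add_right_comm]
  apply add_linearCombination_mem_powExponents (single_le_iff.2 (Nat.one_le_iff_ne_zero.2 hi))
  simpa using a4b4_add_x_add_a4xy2_mem i

theorem apply_y_le_of_notMem (hmu : a4b4 + linearCombination ℕ exponent m ≤ u)
    (hu : u ∉ powExponents exponent (m.degree + 1)) {i : Fin n} (hi : m (b4x2y i) ≠ 0) :
    u (.inr (.inr i)) ≤ 2 * m (a4xy2 i) + m (b4x2y i) := by
  contrapose! hu
  have hlt : (a4b4 + linearCombination ℕ exponent m : Vars n →₀ ℕ) (.inr (.inr i)) <
      u (.inr (.inr i)) := by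
    simpa [a4b4, linearCombination_exponent_apply_y] using hu
  refine isUpperSet_powExponents _ _ (add_single_one_le_of_lt hmu hlt) ?_
  rw [add_right_comm]
  apply add_linearCombination_mem_powExponents (single_le_iff.2 (Nat.one_le_iff_ne_zero.2 hi))
  simpa using a4b4_add_y_add_b4x2y_mem i

theorem mem_of_add_single_x_mem {i : Fin n} (hx : 2 ≤ u (.inr (.inl i)))
    (hy : u (.inr (.inr i)) ≤ 1) (h : u + single (.inr (.inl i)) 1 ∈ powExponents exponent k) :
    u ∈ powExponents exponent k := by
  obtain ⟨m, hm, hmu⟩ := h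
  refine ⟨m, hm, fun v => ?_⟩
  by_cases hv : v = .inr (.inl i)
  · have hmy : 2 * m (a4xy2 i) + m (b4x2y i) ≤ u (.inr (.inr i)) := by
      simpa [linearCombination_exponent_apply_y] using hmu (.inr (.inr i))
    rw [hv, linearCombination_exponent_apply_x]
    omega
  · simpa [hv] using hmu v

theorem mem_of_add_single_y_mem {i : Fin n} (hx : u (.inr (.inl i)) ≤ 1)
    (hy : 2 ≤ u (.inr (.inr i))) (h : u + single (.inr (.inr i)) 1 ∈ powExponents exponent k) :
    u ∈ powExponents exponent k := by
  obtain ⟨m, hm, hmu⟩ := h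
  refine ⟨m, hm, fun v => ?_⟩
  by_cases hv : v = .inr (.inr i)
  · have hmx : m (a4xy2 i) + 2 * m (b4x2y i) ≤ u (.inr (.inl i)) := by
      simpa [linearCombination_exponent_apply_x] using hmu (.inr (.inl i))
    rw [hv, linearCombination_exponent_apply_y]
    omega
  · simpa [hv] using hmu v

theorem mem_powExponents_of_forall_add_single_mem (hk : Even k ∨ 2 * n + 1 < k)
    (h : ∀ v, u + single v 1 ∈ powExponents exponent k) : u ∈ powExponents exponent k := by
  by_contra hu
  obtain ⟨m, rfl, hmu⟩ := exists_a4b4_add_linearCombination_le (h (.inl 2)) hu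
  have hm : a4b4 + linearCombination ℕ exponent m ∉ powExponents exponent (m.degree + 1) :=
    fun hm => hu (isUpperSet_powExponents _ _ hmu hm)
  obtain ⟨i, hi⟩ := exists_apply_a4xy2_ne_apply_b4x2y hm
    (hk.imp (by simp [Nat.even_add_one]) (by omega))
  have ha := apply_a4xy2_le_one_of_notMem hm i
  have hb := apply_b4x2y_le_one_of_notMem hm i
  have hx : m (a4xy2 i) + 2 * m (b4x2y i) ≤ u (.inr (.inl i)) := by
    simpa [a4b4, linearCombination_exponent_apply_x] using hmu (.inr (.inl i))
  have hy : 2 * m (a4xy2 i) + m (b4x2y i) ≤ u (.inr (.inr i)) := by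
    simpa [a4b4, linearCombination_exponent_apply_y] using hmu (.inr (.inr i))
  rcases hi.lt_or_gt with hlt | hgt
  · have hy' := apply_y_le_of_notMem hmu hu (i := i) (by omega)
    exact hu (mem_of_add_single_x_mem (by omega) (by omega) (h (.inr (.inl i))))
  · have hx' := apply_x_le_of_notMem hmu hu (i := i) (by omega)
    exact hu (mem_of_add_single_y_mem (by omega) (by omega) (h (.inr (.inr i))))

end Obstruction

end Generator

theorem idealI_le_mMax : idealI K n ≤ mMax K n := by
  rw [Generator.idealI_eq_span_range_monomial, mMax_eq_ker_constantCoeff, Ideal.span_le]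
  rintro _ ⟨g, rfl⟩
  cases g <;> simp [Generator.exponent, RingHom.mem_ker, constantCoeff_monomial]

theorem colon_max_eq_of_even_general (k : ℕ) (hk : k ≠ 0) (hkn : Even k ∨ 2 * n + 1 < k) :
    ((idealI K n) ^ k).colon (mMax K n) = (idealI K n) ^ k ∧
    mMax K n ∉ associatedPrimes (MvPolynomial (Vars n) K)
      (MvPolynomial (Vars n) K ⧸ (idealI K n) ^ k) ∧
    0 < depthWrt (mMax K n) (MvPolynomial (Vars n) K ⧸ (idealI K n) ^ k) := by
  have hmem (f : MvPolynomial (Vars n) K) : f ∈ idealI K n ^ k ↔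
      ∀ u ∈ f.support, u ∈ powExponents Generator.exponent k := by
    rw [Generator.idealI_eq_span_range_monomial, mem_span_range_monomial_pow_iff]
  have hcolon : (idealI K n ^ k).colon (mMax K n) = idealI K n ^ k :=
    colon_span_range_X_eq_self hmem fun _ =>
      Generator.mem_powExponents_of_forall_add_single_mem hkn
  exact ⟨hcolon, notMem_associatedPrimes_quotient_of_colon_eq hcolon,
    depthWrt_quotient_pos_of_colon_eq ((Ideal.pow_le_self hk).trans (idealI_le_mMax K n)) hcolon⟩

/-- For every even integer `k` with `2 ≤ k ≤ 2n`, the colon ideal `Iᵏ : m` equals `Iᵏ`;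
equivalently, `m` is not an associated prime of `S/Iᵏ`, so `depth(S/Iᵏ) > 0`. -/
theorem colon_max_eq_of_even (k : ℕ) (heven : Even k) (h1 : 2 ≤ k) (h2 : k ≤ 2 * n) :
    ((idealI K n) ^ k).colon (mMax K n) = (idealI K n) ^ k ∧
    mMax K n ∉ associatedPrimes (MvPolynomial (Vars n) K)
      (MvPolynomial (Vars n) K ⧸ (idealI K n) ^ k) ∧
    0 < depthWrt (mMax K n) (MvPolynomial (Vars n) K ⧸ (idealI K n) ^ k) :=
  colon_max_eq_of_even_general K n k (by omega) (.inl heven)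
end
end

section
/- For every even integer k with 2 ≤ k ≤ 2n, the prime ideal P = (a,b,c,d,x_1,y_1,…,x_{n-1},y_{n-1},x_n) (i.e., the ideal generated by all variables except y_n) is an associated prime of S/I^k. -/
open MvPolynomial

noncomputable section

variable (K : Type*) [Field K] (n : ℕ)

/-- The prime ideal `P = (a,b,c,d,x₁,y₁,…,x_{n-1},y_{n-1},xₙ)` generated by all the
variables except `yₙ`. -/
def idealP : Ideal (MvPolynomial (Vars n) K) :=
  Ideal.span
    ({va K n, vb K n, vc K n, vd K n} ∪ Set.range (vx K n) ∪
     (vy K n) '' {i : Fin n | (i : ℕ) + 1 < n})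

/-!
Let `y_ℓ` be the variable left out. Write `fᵢ = a⁴xᵢyᵢ²` and `gᵢ = b⁴xᵢ²yᵢ`. For `k = 2r + 2`,
choose a set `A` of `r` indices not containing `ℓ`, and let
`w = a⁴b⁴ · f_ℓ · ∏_{i ∈ A} fᵢgᵢ · ∏_{i ∉ A ∪ {ℓ}} xᵢyᵢ`. Then `w` is in `I ^ (k - 1)`, and
multiplying it by a variable other than `y_ℓ` gains one more generator: each of `a, b, c, d` turns
`a⁴b⁴` into an element of `I`; `xᵢ` turns `b⁴xᵢyᵢ` into `gᵢ`, or exchanges a factor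
`fᵢ` for `gᵢ` and so frees enough powers of `a` to split off `a⁶`; `yᵢ` acts symmetrically, with
`fᵢ`, `gᵢ` and `a`, `b` swapped.

Conversely, no `w · y_ℓ^t` is in `I ^ k`. The exponents of the `xᵢ` and `yᵢ` allow at most `r + 1`
factors `fᵢ` and `r` factors `gᵢ`, so at least one of the `k` generators is among
`a⁶, a⁵b, ab⁵, b⁶`, and the exponents `4r + 8` of `a` and `4r + 4` of `b` leave no room for it.
-/

section MonomialIdeals

variable {σ ι R : Type*}

theorem isPrime_span_X_image [CommRing R] [IsDomain R] (s : Set σ) :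
    (Ideal.span (X '' s : Set (MvPolynomial σ R))).IsPrime := by
  classical
  set P := Ideal.span (X '' s : Set (MvPolynomial σ R))
  let φ : MvPolynomial σ R →ₐ[R] MvPolynomial σ R := aeval fun i => if i ∈ s then 0 else X i
  have mk_comp_φ : (Ideal.Quotient.mkₐ R P).comp φ = Ideal.Quotient.mkₐ R P := by
    refine algHom_ext fun i => ?_
    by_cases hi : i ∈ s
    · have hX : Ideal.Quotient.mk P (X i) = 0 :=
        Ideal.Quotient.eq_zero_iff_mem.2 (Ideal.subset_span ⟨i, hi, rfl⟩)
      simp [φ, hi, hX]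
    · simp [φ, hi]
  suffices P = RingHom.ker φ by
    rw [this]
    exact RingHom.ker_isPrime _
  refine le_antisymm (Ideal.span_le.2 ?_) fun f hf => ?_
  · rintro _ ⟨i, hi, rfl⟩
    simp [φ, RingHom.mem_ker, hi]
  · have hmk := DFunLike.congr_fun mk_comp_φ f
    rw [AlgHom.comp_apply, RingHom.mem_ker.1 hf, map_zero] at hmk
    exact Ideal.Quotient.eq_zero_iff_mem.1 hmk.symm

theorem span_range_monomial_one_pow [CommSemiring R] (e : ι → σ →₀ ℕ) (k : ℕ) :
    Ideal.span (Set.range fun j => monomial (e j) (1 : R)) ^ k =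
      Ideal.span ((fun ν => monomial ν (1 : R)) ''
        (Finsupp.linearCombination ℕ e '' {m | m.degree = k})) := by
  rw [Ideal.span, Submodule.span_pow, ← Set.image_univ,
    Finsupp.image_pow_eq_finsuppProd_image, Set.image_image]
  simp [Finsupp.linearCombination_apply, monomial_finsupp_sum_index, monomial_pow,
    Finsupp.degree]

theorem span_X_image_mem_associatedPrimes [CommRing R] [IsDomain R] {J : Ideal (MvPolynomial σ R)}
    {E : Set (σ →₀ ℕ)} (hJ : J = Ideal.span ((fun ν => monomial ν (1 : R)) '' E))
    {s : Set σ} {μ : σ →₀ ℕ} (hmem : ∀ i ∈ s, X i * monomial μ 1 ∈ J)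
    (hnot_le : ∀ τ : σ →₀ ℕ, (∀ i ∈ s, τ i = 0) → ∀ ν ∈ E, ¬ ν ≤ τ + μ) :
    Ideal.span (X '' s) ∈ associatedPrimes (MvPolynomial σ R) (MvPolynomial σ R ⧸ J) := by
  have hprime := isPrime_span_X_image (R := R) s
  suffices (⊥ : Submodule (MvPolynomial σ R) (MvPolynomial σ R ⧸ J)).colon
      {Ideal.Quotient.mk J (monomial μ 1)} = Ideal.span (X '' s) from
    ⟨hprime, _, by rw [this, hprime.radical]⟩
  have mem_colon (f : MvPolynomial σ R) :
      f ∈ (⊥ : Submodule (MvPolynomial σ R) (MvPolynomial σ R ⧸ J)).colon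
        {Ideal.Quotient.mk J (monomial μ 1)} ↔ f * monomial μ 1 ∈ J := by
    rw [Submodule.mem_colon_singleton, Submodule.mem_bot, ← Ideal.Quotient.eq_zero_iff_mem,
      map_mul]
    rfl
  refine le_antisymm (fun f hf => ?_) (Ideal.span_le.2 ?_)
  · rw [mem_colon, hJ, mem_ideal_span_monomial_image] at hf
    rw [mem_ideal_span_X_image]
    intro τ hτ
    by_contra! hτs
    obtain ⟨ν, hν, hle⟩ := hf (τ + μ) (by
      rwa [mem_support_iff, coeff_mul_monomial, mul_one, ← mem_support_iff])
    exact hnot_le τ hτs ν hν hle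
  · rintro _ ⟨i, hi, rfl⟩
    exact (mem_colon _).2 (hmem i hi)

end MonomialIdeals

theorem mul_prod_mem_pow_sum_add_one {ι R : Type*} [CommSemiring R] {I : Ideal R} {s : Finset ι}
    {f : ι → R} {w : ι → ℕ} (hf : ∀ i ∈ s, f i ∈ I ^ w i) {j : ι} (hj : j ∈ s) {z : R}
    (hz : z * f j ∈ I ^ (w j + 1)) : z * ∏ i ∈ s, f i ∈ I ^ (∑ i ∈ s, w i + 1) := by
  classical
  have hrest : ∏ i ∈ s.erase j, f i ∈ I ^ ∑ i ∈ s.erase j, w i := by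
    rw [← Finset.prod_pow_eq_pow_sum]
    exact Ideal.prod_mem_prod fun i hi => hf i (Finset.mem_of_mem_erase hi)
  rw [← Finset.mul_prod_erase s f hj, ← Finset.add_sum_erase s w hj, ← mul_assoc,
    add_right_comm, pow_add]
  exact Ideal.mul_mem_mul hz hrest

section Exponents

/-- The exponent vectors of the generators of `idealI`: the six generators in `a, b, c, d`, then
the families `a⁴xᵢyᵢ²` and `b⁴xᵢ²yᵢ`. -/
def generatorExponent : Fin 6 ⊕ Fin n ⊕ Fin n → Vars n →₀ ℕ
  | .inl j =>
    ![.single (.inl 0) 6, .single (.inl 0) 5 + .single (.inl 1) 1,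
      .single (.inl 0) 1 + .single (.inl 1) 5, .single (.inl 1) 6,
      .single (.inl 0) 4 + .single (.inl 1) 4 + .single (.inl 2) 1,
      .single (.inl 0) 4 + .single (.inl 1) 4 + .single (.inl 3) 1] j
  | .inr (.inl i) =>
    .single (.inl 0) 4 + .single (.inr (.inl i)) 1 + .single (.inr (.inr i)) 2
  | .inr (.inr i) =>
    .single (.inl 1) 4 + .single (.inr (.inl i)) 2 + .single (.inr (.inr i)) 1

theorem idealI_eq_span_range_monomial :
    idealI K n = Ideal.span (Set.range fun j => monomial (generatorExponent n j) (1 : K)) := by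
  have monomial_eq_elim : (fun j => monomial (generatorExponent n j) (1 : K)) =
      Sum.elim
        ![va K n ^ 6, va K n ^ 5 * vb K n, va K n * vb K n ^ 5, vb K n ^ 6,
          va K n ^ 4 * vb K n ^ 4 * vc K n, va K n ^ 4 * vb K n ^ 4 * vd K n]
        (Sum.elim (fun i => va K n ^ 4 * vx K n i * vy K n i ^ 2)
          (fun i => vb K n ^ 4 * vx K n i ^ 2 * vy K n i)) := by
    funext j
    rcases j with j | i | i
    · fin_cases j <;>
        simp [generatorExponent, va, vb, vc, vd, X, monomial_pow, monomial_mul]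
    all_goals simp [generatorExponent, va, vb, vx, vy, X, monomial_pow, monomial_mul]
  rw [monomial_eq_elim, Set.Sum.elim_range, Set.Sum.elim_range, ← Set.union_assoc]
  simp only [idealI, Matrix.range_cons, Matrix.range_empty, Set.union_empty, Set.singleton_union]

theorem idealP_eq_span_X_image (ℓ : Fin n) (hℓ : (ℓ : ℕ) + 1 = n) :
    idealP K n = Ideal.span (X '' {.inr (.inr ℓ)}ᶜ) := by
  unfold idealP
  congr 1
  have hlt (i : Fin n) : (i : ℕ) + 1 < n ↔ i ≠ ℓ := by
    rw [ne_eq, Fin.ext_iff]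
    omega
  ext f
  simp [Sum.exists, Fin.exists_fin_succ, va, vb, vc, vd, vx, vy, hlt, eq_comm, or_assoc]

variable {n}

theorem linearCombination_generatorExponent_a (m : Fin 6 ⊕ Fin n ⊕ Fin n →₀ ℕ) :
    Finsupp.linearCombination ℕ (generatorExponent n) m (.inl 0) =
      6 * m (.inl 0) + 5 * m (.inl 1) + m (.inl 2) + 4 * m (.inl 4) + 4 * m (.inl 5) +
        4 * ∑ i, m (.inr (.inl i)) := by
  simp [Finsupp.linearCombination_apply, Finsupp.sum_fintype, Fin.sum_univ_six,
    generatorExponent, Finset.mul_sum, mul_comm]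

theorem linearCombination_generatorExponent_b (m : Fin 6 ⊕ Fin n ⊕ Fin n →₀ ℕ) :
    Finsupp.linearCombination ℕ (generatorExponent n) m (.inl 1) =
      m (.inl 1) + 5 * m (.inl 2) + 6 * m (.inl 3) + 4 * m (.inl 4) + 4 * m (.inl 5) +
        4 * ∑ i, m (.inr (.inr i)) := by
  simp [Finsupp.linearCombination_apply, Finsupp.sum_fintype, Fin.sum_univ_six,
    generatorExponent, Finset.mul_sum, mul_comm]

theorem linearCombination_generatorExponent_c (m : Fin 6 ⊕ Fin n ⊕ Fin n →₀ ℕ) :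
    Finsupp.linearCombination ℕ (generatorExponent n) m (.inl 2) = m (.inl 4) := by
  simp [Finsupp.linearCombination_apply, Finsupp.sum_fintype, Fin.sum_univ_six, generatorExponent]

theorem linearCombination_generatorExponent_d (m : Fin 6 ⊕ Fin n ⊕ Fin n →₀ ℕ) :
    Finsupp.linearCombination ℕ (generatorExponent n) m (.inl 3) = m (.inl 5) := by
  simp [Finsupp.linearCombination_apply, Finsupp.sum_fintype, Fin.sum_univ_six, generatorExponent]

theorem linearCombination_generatorExponent_x (m : Fin 6 ⊕ Fin n ⊕ Fin n →₀ ℕ) (i : Fin n) :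
    Finsupp.linearCombination ℕ (generatorExponent n) m (.inr (.inl i)) =
      m (.inr (.inl i)) + 2 * m (.inr (.inr i)) := by
  simp [Finsupp.linearCombination_apply, Finsupp.sum_fintype, Fin.sum_univ_six,
    generatorExponent, Finsupp.single_apply, mul_comm]

theorem linearCombination_generatorExponent_y (m : Fin 6 ⊕ Fin n ⊕ Fin n →₀ ℕ) (i : Fin n) :
    Finsupp.linearCombination ℕ (generatorExponent n) m (.inr (.inr i)) =
      2 * m (.inr (.inl i)) + m (.inr (.inr i)) := by
  simp [Finsupp.linearCombination_apply, Finsupp.sum_fintype, Fin.sum_univ_six,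
    generatorExponent, Finsupp.single_apply, mul_comm]

end Exponents

section Witness

variable {n} (A : Finset (Fin n)) (ℓ : Fin n)

/-- The exponent vector, for `ℓ ∉ A`, of the witness
`a⁴b⁴ · a⁴x_ℓy_ℓ² · ∏_{i ∈ A} a⁴b⁴xᵢ³yᵢ³ · ∏_{i ∉ A ∪ {ℓ}} xᵢyᵢ`, whose annihilator modulo
`idealI ^ (2 * A.card + 2)` is generated by the variables other than `y_ℓ`. -/
def witnessExponent : Vars n →₀ ℕ :=
  Finsupp.equivFunOnFinite.symm <|
    Sum.elim ![4 * A.card + 8, 4 * A.card + 4, 0, 0] <|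
      Sum.elim (fun i => if i ∈ A then 3 else 1)
        (fun i => if i ∈ A then 3 else if i = ℓ then 2 else 1)

/-- The contribution of the pair `xᵢ, yᵢ` to the witness monomial. -/
def witnessFactor (i : Fin n) : MvPolynomial (Vars n) K :=
  if i ∈ A then va K n ^ 4 * vx K n i * vy K n i ^ 2 * (vb K n ^ 4 * vx K n i ^ 2 * vy K n i)
  else if i = ℓ then va K n ^ 4 * vx K n i * vy K n i ^ 2
  else vx K n i * vy K n i

/-- The number of generators of `idealI` that make up `witnessFactor K A ℓ i`. -/
def witnessOrder (i : Fin n) : ℕ :=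
  if i ∈ A then 2 else if i = ℓ then 1 else 0

variable {A ℓ}

theorem monomial_witnessExponent (hℓ : ℓ ∉ A) :
    monomial (witnessExponent A ℓ) (1 : K) =
      va K n ^ 4 * vb K n ^ 4 * ∏ i, witnessFactor K A ℓ i := by
  have factor_eq (i : Fin n) : witnessFactor K A ℓ i =
      va K n ^ (4 * if i ∈ insert ℓ A then 1 else 0) * vb K n ^ (4 * if i ∈ A then 1 else 0) *
        (vx K n i ^ (if i ∈ A then 3 else 1) *
          vy K n i ^ (if i ∈ A then 3 else if i = ℓ then 2 else 1)) := by
    unfold witnessFactor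
    split_ifs <;> simp_all <;> ring
  have prod_eq : ∏ i, witnessFactor K A ℓ i =
      va K n ^ (4 * (A.card + 1)) * vb K n ^ (4 * A.card) *
        ((∏ i, vx K n i ^ (if i ∈ A then 3 else 1)) *
          ∏ i, vy K n i ^ (if i ∈ A then 3 else if i = ℓ then 2 else 1)) := by
    simp only [factor_eq, Finset.prod_mul_distrib, Finset.prod_pow_eq_pow_sum, ← Finset.mul_sum,
      Finset.sum_boole, Finset.filter_univ_mem, Finset.card_insert_of_notMem hℓ, Nat.cast_id]
  have exponent_eq : monomial (witnessExponent A ℓ) (1 : K) =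
      va K n ^ (4 * A.card + 8) * vb K n ^ (4 * A.card + 4) *
        ((∏ i, vx K n i ^ (if i ∈ A then 3 else 1)) *
          ∏ i, vy K n i ^ (if i ∈ A then 3 else if i = ℓ then 2 else 1)) := by
    rw [monomial_eq, Finsupp.prod_fintype _ _ fun _ => pow_zero _]
    simp [-pow_ite, witnessExponent, Fin.prod_univ_four, va, vb, vx, vy]
  rw [exponent_eq, prod_eq]
  ring

theorem sum_witnessOrder (hℓ : ℓ ∉ A) : ∑ i, witnessOrder A ℓ i = 2 * A.card + 1 := by
  have order_eq (i : Fin n) : witnessOrder A ℓ i =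
      (if i ∈ insert ℓ A then 1 else 0) + if i ∈ A then 1 else 0 := by
    unfold witnessOrder
    split_ifs <;> simp_all
  simp only [order_eq, Finset.sum_add_distrib, Finset.sum_boole, Finset.filter_univ_mem,
    Finset.card_insert_of_notMem hℓ, Nat.cast_id]
  ring

theorem a_pow_mul_x_mul_y_sq_mem_idealI (i : Fin n) :
    va K n ^ 4 * vx K n i * vy K n i ^ 2 ∈ idealI K n :=
  Ideal.subset_span (.inl (.inr ⟨i, rfl⟩))

theorem b_pow_mul_x_sq_mul_y_mem_idealI (i : Fin n) :
    vb K n ^ 4 * vx K n i ^ 2 * vy K n i ∈ idealI K n :=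
  Ideal.subset_span (.inr ⟨i, rfl⟩)

theorem witnessFactor_mem_idealI_pow (i : Fin n) :
    witnessFactor K A ℓ i ∈ idealI K n ^ witnessOrder A ℓ i := by
  unfold witnessFactor witnessOrder
  split_ifs
  · rw [pow_two]
    exact Ideal.mul_mem_mul (a_pow_mul_x_mul_y_sq_mem_idealI K i)
      (b_pow_mul_x_sq_mul_y_mem_idealI K i)
  · rw [pow_one]
    exact a_pow_mul_x_mul_y_sq_mem_idealI K i
  · simp

theorem X_inl_mul_witnessFactor_mem_idealI_pow (v : Fin 4) (i : Fin n) :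
    X (.inl v) * (va K n ^ 4 * vb K n ^ 4) * witnessFactor K A ℓ i ∈
      idealI K n ^ (witnessOrder A ℓ i + 1) := by
  rw [pow_succ']
  refine Ideal.mul_mem_mul ?_ (witnessFactor_mem_idealI_pow K i)
  fin_cases v
  · change va K n * _ ∈ _
    rw [show va K n * (va K n ^ 4 * vb K n ^ 4) = vb K n ^ 3 * (va K n ^ 5 * vb K n) by ring]
    exact Ideal.mul_mem_left _ _ (Ideal.subset_span (by simp))
  · change vb K n * _ ∈ _
    rw [show vb K n * (va K n ^ 4 * vb K n ^ 4) = va K n ^ 3 * (va K n * vb K n ^ 5) by ring]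
    exact Ideal.mul_mem_left _ _ (Ideal.subset_span (by simp))
  · change vc K n * _ ∈ _
    rw [mul_comm]
    exact Ideal.subset_span (by simp)
  · change vd K n * _ ∈ _
    rw [mul_comm]
    exact Ideal.subset_span (by simp)

theorem x_mul_witnessFactor_mem_idealI_pow (i : Fin n) :
    vx K n i * (va K n ^ 4 * vb K n ^ 4) * witnessFactor K A ℓ i ∈
      idealI K n ^ (witnessOrder A ℓ i + 1) := by
  have hg := b_pow_mul_x_sq_mul_y_mem_idealI K i
  have ha : va K n ^ 6 ∈ idealI K n := Ideal.subset_span (by simp)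
  have exchange : vx K n i * (va K n ^ 4 * vb K n ^ 4) *
      (va K n ^ 4 * vx K n i * vy K n i ^ 2) ∈ idealI K n ^ 2 := by
    rw [show vx K n i * (va K n ^ 4 * vb K n ^ 4) * (va K n ^ 4 * vx K n i * vy K n i ^ 2) =
      va K n ^ 2 * vy K n i * (vb K n ^ 4 * vx K n i ^ 2 * vy K n i * va K n ^ 6) by ring, pow_two]
    exact Ideal.mul_mem_left _ _ (Ideal.mul_mem_mul hg ha)
  unfold witnessFactor witnessOrder
  split_ifs
  · rw [← mul_assoc, pow_succ]
    exact Ideal.mul_mem_mul exchange hg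
  · exact exchange
  · rw [zero_add, pow_one, show vx K n i * (va K n ^ 4 * vb K n ^ 4) * (vx K n i * vy K n i) =
      va K n ^ 4 * (vb K n ^ 4 * vx K n i ^ 2 * vy K n i) by ring]
    exact Ideal.mul_mem_left _ _ hg

theorem y_mul_witnessFactor_mem_idealI_pow {i : Fin n} (hi : i ≠ ℓ) :
    vy K n i * (va K n ^ 4 * vb K n ^ 4) * witnessFactor K A ℓ i ∈
      idealI K n ^ (witnessOrder A ℓ i + 1) := by
  have hf := a_pow_mul_x_mul_y_sq_mem_idealI K i
  have hb : vb K n ^ 6 ∈ idealI K n := Ideal.subset_span (by simp)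
  have exchange : vy K n i * (va K n ^ 4 * vb K n ^ 4) *
      (vb K n ^ 4 * vx K n i ^ 2 * vy K n i) ∈ idealI K n ^ 2 := by
    rw [show vy K n i * (va K n ^ 4 * vb K n ^ 4) * (vb K n ^ 4 * vx K n i ^ 2 * vy K n i) =
      vb K n ^ 2 * vx K n i * (va K n ^ 4 * vx K n i * vy K n i ^ 2 * vb K n ^ 6) by ring, pow_two]
    exact Ideal.mul_mem_left _ _ (Ideal.mul_mem_mul hf hb)
  unfold witnessFactor witnessOrder
  split_ifs
  · rw [mul_left_comm, pow_succ']
    exact Ideal.mul_mem_mul hf exchange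
  · rw [zero_add, pow_one, show vy K n i * (va K n ^ 4 * vb K n ^ 4) * (vx K n i * vy K n i) =
      vb K n ^ 4 * (va K n ^ 4 * vx K n i * vy K n i ^ 2) by ring]
    exact Ideal.mul_mem_left _ _ hf

theorem X_mul_monomial_witnessExponent_mem_idealI_pow (hℓ : ℓ ∉ A) {v : Vars n}
    (hv : v ≠ .inr (.inr ℓ)) :
    X v * monomial (witnessExponent A ℓ) (1 : K) ∈ idealI K n ^ (2 * A.card + 2) := by
  obtain ⟨j, hj⟩ : ∃ j, X v * (va K n ^ 4 * vb K n ^ 4) * witnessFactor K A ℓ j ∈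
      idealI K n ^ (witnessOrder A ℓ j + 1) := by
    rcases v with v | i | i
    · exact ⟨ℓ, X_inl_mul_witnessFactor_mem_idealI_pow K v ℓ⟩
    · exact ⟨i, x_mul_witnessFactor_mem_idealI_pow K i⟩
    · exact ⟨i, y_mul_witnessFactor_mem_idealI_pow K fun hi => hv (by rw [hi])⟩
  have hprod := mul_prod_mem_pow_sum_add_one (fun i _ => witnessFactor_mem_idealI_pow K i)
    (Finset.mem_univ j) hj
  rwa [sum_witnessOrder hℓ, mul_assoc, ← monomial_witnessExponent K hℓ] at hprod

/-- Here `u₁, u₂, u₃, u₄, p, q` are the multiplicities of `a⁶`, `a⁵b`, `ab⁵`, `b⁶`, of the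
`a⁴xᵢyᵢ²` and of the `b⁴xᵢ²yᵢ` in a product of `2 * r + 2` generators. -/
theorem lt_b_exponent_of_a_exponent_le {r p q u₁ u₂ u₃ u₄ : ℕ} (hp : p ≤ r + 1) (hq : q ≤ r)
    (hcount : u₁ + u₂ + u₃ + u₄ + p + q = 2 * r + 2)
    (ha : 6 * u₁ + 5 * u₂ + u₃ + 4 * p ≤ 4 * r + 8) :
    4 * r + 4 < u₂ + 5 * u₃ + 6 * u₄ + 4 * q := by
  by_contra! hb
  -- By `hcount`, the total degree in `a, b` is `4 * (2 * r + 2) + 2 * (u₁ + u₂ + u₃ + u₄)`.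
  have hu : u₁ + u₂ + u₃ + u₄ ≤ 2 := by omega
  obtain hpr | hpr : p = r + 1 ∨ p = r := by omega
  · have hu₁ : u₁ = 0 := by omega
    have hu₂ : u₂ = 0 := by omega
    omega
  · have hu₃ : u₃ = 0 := by omega
    omega

theorem not_linearCombination_generatorExponent_le (hℓ : ℓ ∉ A) {τ : Vars n →₀ ℕ}
    (hτ : ∀ v ≠ .inr (.inr ℓ), τ v = 0) {m : Fin 6 ⊕ Fin n ⊕ Fin n →₀ ℕ}
    (hm : m.degree = 2 * A.card + 2) :
    ¬ Finsupp.linearCombination ℕ (generatorExponent n) m ≤ τ + witnessExponent A ℓ := by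
  intro hle
  have coord_le {v : Vars n} (hv : v ≠ .inr (.inr ℓ)) :
      Finsupp.linearCombination ℕ (generatorExponent n) m v ≤ witnessExponent A ℓ v := by
    simpa [hτ v hv] using hle v
  have ha := coord_le (v := .inl 0) (by simp)
  have hb := coord_le (v := .inl 1) (by simp)
  have hc := coord_le (v := .inl 2) (by simp)
  have hd := coord_le (v := .inl 3) (by simp)
  have hx (i : Fin n) := coord_le (v := .inr (.inl i)) (by simp)
  have hy (i : Fin n) (hi : i ≠ ℓ) := coord_le (v := .inr (.inr i)) (by simpa using hi)
  simp only [linearCombination_generatorExponent_a, linearCombination_generatorExponent_b,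
    linearCombination_generatorExponent_c, linearCombination_generatorExponent_d,
    linearCombination_generatorExponent_x, linearCombination_generatorExponent_y,
    witnessExponent, Finsupp.equivFunOnFinite_symm_apply_apply, Sum.elim_inl, Sum.elim_inr,
    Matrix.cons_val] at ha hb hc hd hx hy
  have hp : ∑ i, m (.inr (.inl i)) ≤ A.card + 1 := by
    have hpi (i : Fin n) : m (.inr (.inl i)) ≤ if i ∈ insert ℓ A then 1 else 0 := by
      have := hx i
      have := hy i
      grind
    simpa [Finset.card_insert_of_notMem hℓ, -Finset.mem_insert] using
      Finset.sum_le_sum fun i (_ : i ∈ Finset.univ) => hpi i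
  have hq : ∑ i, m (.inr (.inr i)) ≤ A.card := by
    have hqi (i : Fin n) : m (.inr (.inr i)) ≤ if i ∈ A then 1 else 0 := by
      have := hx i
      grind
    simpa using Finset.sum_le_sum fun i (_ : i ∈ Finset.univ) => hqi i
  simp only [Finsupp.degree_eq_sum, Fintype.sum_sum_type, Fin.sum_univ_six] at hm
  have hb_gt := lt_b_exponent_of_a_exponent_le (u₁ := m (.inl 0)) (u₂ := m (.inl 1))
    (u₃ := m (.inl 2)) (u₄ := m (.inl 3)) hp hq (by omega) (by omega)
  omega

end Witness

variable {n} in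
theorem P_mem_associatedPrimes_general (ℓ : Fin n) {k : ℕ} (heven : Even k) (h1 : 2 ≤ k)
    (h2 : k ≤ 2 * n) :
    Ideal.span (X '' {.inr (.inr ℓ)}ᶜ) ∈ associatedPrimes (MvPolynomial (Vars n) K)
      (MvPolynomial (Vars n) K ⧸ idealI K n ^ k) := by
  obtain ⟨r, rfl⟩ : ∃ r, k = 2 * r + 2 := by
    obtain ⟨j, rfl⟩ := heven
    exact ⟨j - 1, by omega⟩
  obtain ⟨A, hA, rfl⟩ := Finset.exists_subset_card_eq (s := Finset.univ.erase ℓ) (n := r)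
    (by simp only [Finset.card_erase_of_mem, Finset.mem_univ, Finset.card_fin]; omega)
  have hℓ : ℓ ∉ A := fun h => Finset.notMem_erase ℓ _ (hA h)
  refine span_X_image_mem_associatedPrimes
    (by rw [idealI_eq_span_range_monomial, span_range_monomial_one_pow])
    (fun v hv => X_mul_monomial_witnessExponent_mem_idealI_pow K hℓ hv) fun τ hτ => ?_
  rintro _ ⟨m, hm, rfl⟩
  exact not_linearCombination_generatorExponent_le hℓ hτ hm

/-- For every even integer `k` with `2 ≤ k ≤ 2n`, the prime ideal `P` (generated by all
variables except `yₙ`) is an associated prime of `S/Iᵏ`. -/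
theorem P_mem_associatedPrimes (hn : 1 ≤ n) (k : ℕ) (heven : Even k)
    (h1 : 2 ≤ k) (h2 : k ≤ 2 * n) :
    idealP K n ∈ associatedPrimes (MvPolynomial (Vars n) K)
      (MvPolynomial (Vars n) K ⧸ (idealI K n) ^ k) := by
  rw [idealP_eq_span_X_image K n ⟨n - 1, by omega⟩ (Nat.sub_add_cancel hn)]
  exact P_mem_associatedPrimes_general K _ heven h1 h2
end
end
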